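/- Let Q be a positive-definite quadratic form on ℝ^r, let a ∈ ℤ^r be a nonzero vector, let P(x₀, x₁, …, x_r) be a polynomial, and let N > 0. Suppose f : ℕ × ℤ^r → ℝ satisfies f(n, v) = exp(-Q(v)/(2n))·P(n^{-1/2}, n^{-1/2}v) + o(n^{-N}) uniformly in v as n → ∞. Then there exists a polynomial P'(x₀, x₁, …, x_r) such that f(n, v + a) − f(n, v) = n^{-1/2}·exp(-Q(v)/(2n))·P'(n^{-1/2}, n^{-1/2}v) + o(n^{-N}) uniformly in v, and moreover deg P'(0, x₁, …, x_r) = 1 + deg P(0, x₁, …, x_r). -/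

import Mathlib

open Filter Asymptotics MvPolynomial

/-- The restriction `P(0, x₁, …, x_r)` of a polynomial in `x₀, x₁, …, x_r`. -/
noncomputable def restrictAtZero (r : ℕ) (P : MvPolynomial (Fin (r + 1)) ℝ) :
    MvPolynomial (Fin r) ℝ :=
  MvPolynomial.aeval (Fin.cons 0 fun i : Fin r => MvPolynomial.X i) P

/-! Write `s = n^{-1/2}`. Up to the error, `f (n, v)` is `exp (-Q y / 2) * P (s, y)` at `y = s v`,
and adding `a` to `v` moves `y` by `s a`. Differentiating `exp (-Q / 2) * p` in the direction `a`
gives `exp (-Q / 2) * L p` with `L p = ∂ₐ p - B (a, ·) * p`, where `B` is the bilinear form of `Q`.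
So the Taylor expansion in the length of the step, with the variable `x₀ = s` held fixed as a
parameter, exhibits the difference as `s * exp (-Q / 2) * P'` for
`P' = ∑ k ≤ K, x₀ᵏ / (k + 1)! • Lᵏ⁺¹ P`, with an error `O (s ^ (K + 2))` that is uniform in `v`
because a Gaussian times a polynomial is bounded. At `x₀ = 0` only `L (P (0, ·))` survives, and `L`
raises the degree by exactly one: `B (a, ·)` is a nonzero linear form and `∂ₐ` does not raise
degrees. -/

open Set QuadraticMap
open scoped Nat

section Taylor

variable {𝕜 E F : Type*} [NormedAddCommGroup F]

theorem hasDerivAt_add_smul_of_hasLineDerivAt [NontriviallyNormedField 𝕜] [AddCommGroup E]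
    [Module 𝕜 E] [NormedSpace 𝕜 F] {f : E → F} {f' : F} {x b : E} {t : 𝕜}
    (h : HasLineDerivAt 𝕜 f f' (x + t • b) b) : HasDerivAt (fun u : 𝕜 => f (x + u • b)) f' t := by
  have h₀ : HasDerivAt (fun u : 𝕜 => f (x + t • b + u • b)) f' (t - t) := by
    rw [sub_self]; exact h
  convert h₀.comp_sub_const t t using 2 with u
  rw [add_assoc, ← add_smul, add_sub_cancel]

variable [NormedSpace ℝ F] {g : ℕ → ℝ → F}

theorem iteratedDeriv_eq_of_hasDerivAt (hg : ∀ k t, HasDerivAt (g k) (g (k + 1) t) t) (k : ℕ) :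
    iteratedDeriv k (g 0) = g k := by
  induction k with
  | zero => exact iteratedDeriv_zero
  | succ k ih => rw [iteratedDeriv_succ, ih]; exact funext fun t => (hg k t).deriv

theorem norm_sub_sum_taylor_le_of_hasDerivAt (hg : ∀ k t, HasDerivAt (g k) (g (k + 1) t) t)
    {a b C s : ℝ} {n : ℕ} (hab : a < b) (hs : s ∈ Icc a b)
    (hC : ∀ t ∈ Icc a b, ‖g (n + 1) t‖ ≤ C) :
    ‖g 0 s - ∑ k ∈ Finset.range (n + 1), ((k ! : ℝ)⁻¹ * (s - a) ^ k) • g k a‖ ≤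
      C * (s - a) ^ (n + 1) / n ! := by
  have smooth (m : ℕ) : ContDiff ℝ m (g 0) :=
    contDiff_of_differentiable_iteratedDeriv fun k _ => by
      rw [iteratedDeriv_eq_of_hasDerivAt hg]
      exact fun t => (hg k t).differentiableAt
  have deriv_within {t : ℝ} (ht : t ∈ Icc a b) (k : ℕ) :
      iteratedDerivWithin k (g 0) (Icc a b) t = g k t := by
    rw [iteratedDerivWithin_eq_iteratedDeriv (uniqueDiffOn_Icc hab) (smooth k).contDiffAt ht,
      iteratedDeriv_eq_of_hasDerivAt hg]
  have := taylor_mean_remainder_bound hab.le (smooth (n + 1)).contDiffOn hs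
    fun t ht => (deriv_within ht (n + 1)).symm ▸ hC t ht
  simpa only [taylor_within_apply, deriv_within (left_mem_Icc.2 hab.le)] using this

end Taylor

section Polynomial

variable {ι R 𝕜 : Type*}

/-- The derivation `∑ i, b i • ∂ᵢ` of the polynomial ring: differentiation in the direction `b`. -/
noncomputable def dirDeriv [CommSemiring R] (b : ι → R) :
    Derivation R (MvPolynomial ι R) (MvPolynomial ι R) :=
  mkDerivation R fun i => C (b i)

theorem totalDegree_dirDeriv_le [CommSemiring R] (b : ι → R) (p : MvPolynomial ι R) :
    (dirDeriv b p).totalDegree ≤ p.totalDegree := by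
  conv_lhs => rw [p.as_sum, map_sum]
  refine totalDegree_finsetSum_le fun s hs => ?_
  rw [dirDeriv, mkDerivation_monomial]
  refine (totalDegree_smul_le _ _).trans (totalDegree_finsetSum_le fun i _ => ?_)
  calc (monomial (s - Finsupp.single i 1) (s i : R) • C (b i)).totalDegree
      ≤ (monomial (s - Finsupp.single i 1) (s i : R)).totalDegree + (C (b i)).totalDegree :=
        totalDegree_mul _ _
    _ ≤ (s - Finsupp.single i 1).degree := by
        rw [totalDegree_C, add_zero]; exact totalDegree_monomial_le _ _
    _ ≤ s.degree := Finsupp.degree_mono tsub_le_self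
    _ ≤ p.totalDegree := le_totalDegree hs

theorem totalDegree_dirDeriv_sub_mul [CommRing R] [IsDomain R] (b : ι → R)
    {ℓ p : MvPolynomial ι R} (hℓ : 0 < ℓ.totalDegree) (hp : p ≠ 0) :
    (dirDeriv b p - ℓ * p).totalDegree = p.totalDegree + ℓ.totalDegree := by
  have hℓp : (-(ℓ * p)).totalDegree = p.totalDegree + ℓ.totalDegree := by
    rw [totalDegree_neg, totalDegree_mul_of_isDomain (by rintro rfl; simp at hℓ) hp, add_comm]
  rw [sub_eq_add_neg, totalDegree_add_eq_right_of_totalDegree_lt, hℓp]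
  have := totalDegree_dirDeriv_le b p
  omega

theorem hasLineDerivAt_eval [NontriviallyNormedField 𝕜] (p : MvPolynomial ι 𝕜) (x b : ι → 𝕜) :
    HasLineDerivAt 𝕜 (fun y => eval y p) (eval x (dirDeriv b p)) x b := by
  unfold HasLineDerivAt
  induction p using MvPolynomial.induction_on with
  | C c => simpa using hasDerivAt_const (0 : 𝕜) c
  | add p q hp hq => simpa using hp.fun_add hq
  | mul_X p i hp =>
    have hX : HasDerivAt (fun t : 𝕜 => x i + t * b i) (b i) 0 := by
      simpa using ((hasDerivAt_id (0 : 𝕜)).mul_const (b i)).const_add (x i)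
    simpa [dirDeriv, mkDerivation_X, add_comm, mul_comm] using hp.fun_mul hX

theorem exists_abs_eval_le_mul_exp [Fintype ι] (p : MvPolynomial ι ℝ) :
    ∃ C D : ℝ, 0 ≤ C ∧ 0 ≤ D ∧ ∀ y : ι → ℝ, |eval y p| ≤ C * Real.exp (D * ‖y‖) := by
  induction p using MvPolynomial.induction_on with
  | C c => exact ⟨|c|, 0, abs_nonneg _, le_rfl, fun y => by simp⟩
  | add p q hp hq =>
    obtain ⟨C₁, D₁, hC₁, hD₁, hp⟩ := hp
    obtain ⟨C₂, D₂, hC₂, hD₂, hq⟩ := hq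
    refine ⟨C₁ + C₂, D₁ + D₂, by positivity, by positivity, fun y => ?_⟩
    calc |eval y (p + q)| ≤ |eval y p| + |eval y q| := by rw [map_add]; exact abs_add_le _ _
      _ ≤ C₁ * Real.exp (D₁ * ‖y‖) + C₂ * Real.exp (D₂ * ‖y‖) := add_le_add (hp y) (hq y)
      _ ≤ (C₁ + C₂) * Real.exp ((D₁ + D₂) * ‖y‖) := by
        rw [add_mul]; gcongr <;> linarith
  | mul_X p i hp =>
    obtain ⟨C, D, hC, hD, hp⟩ := hp
    refine ⟨C, D + 1, hC, by positivity, fun y => ?_⟩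
    have hy : |y i| ≤ Real.exp ‖y‖ :=
      (norm_le_pi_norm y i).trans (by linarith [Real.add_one_le_exp ‖y‖])
    calc |eval y (p * X i)| = |eval y p| * |y i| := by rw [map_mul, abs_mul, eval_X]
      _ ≤ C * Real.exp (D * ‖y‖) * Real.exp ‖y‖ := by gcongr; exact hp y
      _ = C * Real.exp ((D + 1) * ‖y‖) := by rw [mul_assoc, ← Real.exp_add, add_one_mul]

/-- The linear form `ℓ` as a homogeneous polynomial of degree one. -/
noncomputable def linearPoly [CommSemiring R] [Fintype ι] [DecidableEq ι] (ℓ : (ι → R) →ₗ[R] R) :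
    MvPolynomial ι R :=
  ∑ i, C (ℓ (Pi.single i 1)) * X i

variable [Fintype ι] [DecidableEq ι]

theorem eval_linearPoly [CommSemiring R] (ℓ : (ι → R) →ₗ[R] R) (x : ι → R) :
    eval x (linearPoly ℓ) = ℓ x := by
  conv_rhs => rw [← Finset.univ_sum_single x, map_sum]
  simp only [linearPoly, map_sum, map_mul, eval_C, eval_X]
  refine Finset.sum_congr rfl fun i _ => ?_
  rw [mul_comm, ← smul_eq_mul, ← map_smul, ← Pi.single_smul, smul_eq_mul, mul_one]

theorem totalDegree_linearPoly [CommSemiring R] {ℓ : (ι → R) →ₗ[R] R} (hℓ : ℓ ≠ 0) :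
    (linearPoly ℓ).totalDegree = 1 := by
  have homogeneous : (linearPoly ℓ).IsHomogeneous 1 :=
    IsHomogeneous.sum _ _ _ fun i _ => by
      simpa using (isHomogeneous_C ι (ℓ (Pi.single i 1))).mul (isHomogeneous_X R i)
  refine homogeneous.totalDegree fun h => hℓ (LinearMap.ext fun x => ?_)
  rw [← eval_linearPoly, h, map_zero, LinearMap.zero_apply]

end Polynomial

section Coercive

variable {E : Type*} [NormedAddCommGroup E] [NormedSpace ℝ E] [FiniteDimensional ℝ E]

theorem continuous_quadraticForm (Q : QuadraticForm ℝ E) : Continuous Q := by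
  have hQ : ⇑Q = fun x => (associated Q).toContinuousBilinearMap x x :=
    funext fun x => (associated_eq_self_apply ℝ Q x).symm
  rw [hQ]
  fun_prop

theorem exists_mul_norm_sq_le_of_posDef {Q : QuadraticForm ℝ E} (hQ : Q.PosDef) :
    ∃ δ : ℝ, 0 < δ ∧ ∀ x, δ * ‖x‖ ^ 2 ≤ Q x := by
  cases subsingleton_or_nontrivial E
  · exact ⟨1, one_pos, fun x => by simp [Subsingleton.elim x 0]⟩
  obtain ⟨y, hy, y_min⟩ := (isCompact_sphere (0 : E) 1).exists_isMinOn
    (NormedSpace.sphere_nonempty.2 zero_le_one) (continuous_quadraticForm Q).continuousOn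
  have hy₀ : y ≠ 0 := ne_zero_of_mem_unit_sphere ⟨y, hy⟩
  refine ⟨Q y, hQ y hy₀, fun x => ?_⟩
  rcases eq_or_ne x 0 with rfl | hx
  · simp
  have hx_unit : Q y ≤ Q (‖x‖⁻¹ • x) := y_min (by simp [norm_smul, hx])
  calc Q y * ‖x‖ ^ 2 ≤ Q (‖x‖⁻¹ • x) * ‖x‖ ^ 2 := by gcongr
    _ = Q x := by
      rw [QuadraticMap.map_smul, smul_eq_mul]
      field_simp [norm_ne_zero_iff.2 hx]

theorem exists_exp_neg_mul_exp_norm_le {Q : QuadraticForm ℝ E} (hQ : Q.PosDef) (D : ℝ) :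
    ∃ M : ℝ, ∀ x, Real.exp (-Q x / 2) * Real.exp (D * ‖x‖) ≤ M := by
  obtain ⟨δ, hδ, hQδ⟩ := exists_mul_norm_sq_le_of_posDef hQ
  refine ⟨Real.exp (D ^ 2 / (2 * δ)), fun x => ?_⟩
  rw [← Real.exp_add, Real.exp_le_exp, le_div_iff₀ (by positivity)]
  nlinarith [sq_nonneg (D - δ * ‖x‖), hQδ x]

end Coercive

section PolyGaussian

variable {ι : Type*}

/-- The product `exp (-Q / 2) * p` of a Gaussian and a polynomial. -/
noncomputable def polyGaussian (Q : QuadraticForm ℝ (ι → ℝ)) (p : MvPolynomial ι ℝ) (x : ι → ℝ) :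
    ℝ :=
  Real.exp (-Q x / 2) * eval x p

variable [Fintype ι] [DecidableEq ι]

/-- The operator on polynomials induced by differentiating `exp (-Q / 2) * p` in the direction `b`;
`associated Q b` is half the derivative of `Q` in that direction. -/
noncomputable def gaussianDeriv (Q : QuadraticForm ℝ (ι → ℝ)) (b : ι → ℝ) (p : MvPolynomial ι ℝ) :
    MvPolynomial ι ℝ :=
  dirDeriv b p - linearPoly (associated Q b) * p

theorem gaussianDeriv_zero (Q : QuadraticForm ℝ (ι → ℝ)) (b : ι → ℝ) : gaussianDeriv Q b 0 = 0 := by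
  simp [gaussianDeriv]

theorem totalDegree_gaussianDeriv {Q : QuadraticForm ℝ (ι → ℝ)} {b : ι → ℝ} {p : MvPolynomial ι ℝ}
    (hb : associated Q b ≠ 0) (hp : p ≠ 0) :
    (gaussianDeriv Q b p).totalDegree = p.totalDegree + 1 := by
  have hℓ := totalDegree_linearPoly hb
  rw [gaussianDeriv, totalDegree_dirDeriv_sub_mul b (hℓ ▸ one_pos) hp, hℓ]

theorem gaussianDeriv_eq_zero_iff {Q : QuadraticForm ℝ (ι → ℝ)} {b : ι → ℝ}
    {p : MvPolynomial ι ℝ} (hb : associated Q b ≠ 0) : gaussianDeriv Q b p = 0 ↔ p = 0 := by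
  refine ⟨fun h => ?_, fun h => h ▸ gaussianDeriv_zero Q b⟩
  by_contra hp
  simpa [h] using totalDegree_gaussianDeriv hb hp

theorem hasLineDerivAt_polyGaussian (Q : QuadraticForm ℝ (ι → ℝ)) (p : MvPolynomial ι ℝ)
    (x b : ι → ℝ) :
    HasLineDerivAt ℝ (polyGaussian Q p) (polyGaussian Q (gaussianDeriv Q b p) x) x b := by
  have polar_eq : polar Q x b = 2 * associated Q b x := by
    rw [polar_comm, ← polarBilin_apply_apply, ← two_nsmul_associated ℝ Q, LinearMap.smul_apply,
      LinearMap.smul_apply, nsmul_eq_mul, Nat.cast_ofNat]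
  have hexp : HasDerivAt (fun t : ℝ => Real.exp (-Q (x + t • b) / 2))
      (Real.exp (-Q x / 2) * -associated Q b x) 0 := by
    convert ((Q.hasLineDerivAt x b).fun_neg.div_const 2).exp using 1
    rw [polar_eq, zero_smul, add_zero]
    ring
  refine (hexp.fun_mul (hasLineDerivAt_eval p x b)).congr_deriv ?_
  simp only [polyGaussian, gaussianDeriv, map_sub, map_mul, eval_linearPoly, zero_smul, add_zero]
  ring

theorem abs_polyGaussian_add_smul_sub_sum_le (Q : QuadraticForm ℝ (ι → ℝ)) (p : MvPolynomial ι ℝ)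
    {x b : ι → ℝ} {n : ℕ} {M s : ℝ} (hs : s ∈ Icc (0 : ℝ) 1)
    (hM : ∀ t ∈ Icc (0 : ℝ) 1, |polyGaussian Q ((gaussianDeriv Q b)^[n + 1] p) (x + t • b)| ≤ M) :
    |polyGaussian Q p (x + s • b) -
        ∑ k ∈ Finset.range (n + 1),
          (k ! : ℝ)⁻¹ * s ^ k * polyGaussian Q ((gaussianDeriv Q b)^[k] p) x| ≤
      M * s ^ (n + 1) / n ! := by
  have deriv_line (k : ℕ) (t : ℝ) :
      HasDerivAt (fun u : ℝ => polyGaussian Q ((gaussianDeriv Q b)^[k] p) (x + u • b))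
        (polyGaussian Q ((gaussianDeriv Q b)^[k + 1] p) (x + t • b)) t := by
    rw [Function.iterate_succ_apply']
    exact hasDerivAt_add_smul_of_hasLineDerivAt (hasLineDerivAt_polyGaussian Q _ _ b)
  simpa using norm_sub_sum_taylor_le_of_hasDerivAt deriv_line one_pos hs hM

end PolyGaussian

section Parameter

variable {r : ℕ}

/-- `Q` as a form in the variables `x₀, x₁, …, x_r` that does not depend on the parameter `x₀`. -/
noncomputable def tailForm (Q : QuadraticForm ℝ (Fin r → ℝ)) :
    QuadraticForm ℝ (Fin (r + 1) → ℝ) :=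
  Q.comp (LinearMap.funLeft ℝ ℝ Fin.succ)

theorem tailForm_cons (Q : QuadraticForm ℝ (Fin r → ℝ)) (s : ℝ) (x : Fin r → ℝ) :
    tailForm Q (Fin.cons s x : Fin (r + 1) → ℝ) = Q x := rfl

theorem exists_abs_polyGaussian_tailForm_le {Q : QuadraticForm ℝ (Fin r → ℝ)} (hQ : Q.PosDef)
    (p : MvPolynomial (Fin (r + 1)) ℝ) :
    ∃ M, ∀ s ∈ Icc (0 : ℝ) 1, ∀ x, |polyGaussian (tailForm Q) p (Fin.cons s x)| ≤ M := by
  obtain ⟨C, D, hC, hD, hp⟩ := exists_abs_eval_le_mul_exp p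
  obtain ⟨M, hM⟩ := exists_exp_neg_mul_exp_norm_le hQ D
  refine ⟨C * Real.exp D * M, fun s hs x => ?_⟩
  have norm_cons : ‖(Fin.cons s x : Fin (r + 1) → ℝ)‖ ≤ 1 + ‖x‖ := by
    refine (pi_norm_le_iff_of_nonneg (by positivity)).2 (Fin.cases ?_ fun i => ?_)
    · rw [Fin.cons_zero, Real.norm_of_nonneg hs.1]
      linarith [hs.2, norm_nonneg x]
    · exact (norm_le_pi_norm x i).trans (by linarith)
  calc |polyGaussian (tailForm Q) p (Fin.cons s x)|
      = Real.exp (-Q x / 2) * |eval (Fin.cons s x) p| := by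
        rw [polyGaussian, tailForm_cons, abs_mul, Real.abs_exp]
    _ ≤ Real.exp (-Q x / 2) * (C * Real.exp (D * (1 + ‖x‖))) := by
        gcongr
        exact (hp _).trans (by gcongr)
    _ = C * Real.exp D * (Real.exp (-Q x / 2) * Real.exp (D * ‖x‖)) := by
        rw [mul_add, mul_one, Real.exp_add]; ring
    _ ≤ C * Real.exp D * M := by gcongr; exact hM x

theorem restrictAtZero_dirDeriv (b : Fin r → ℝ) (p : MvPolynomial (Fin (r + 1)) ℝ) :
    restrictAtZero r (dirDeriv (Fin.cons 0 b) p) = dirDeriv b (restrictAtZero r p) := by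
  unfold restrictAtZero
  induction p using MvPolynomial.induction_on with
  | C c => simp [dirDeriv]
  | add p q hp hq => simp only [map_add, hp, hq]
  | mul_X p i hp =>
    rw [Derivation.leibniz, map_add, smul_eq_mul, smul_eq_mul, map_mul, map_mul, map_mul, hp,
      Derivation.leibniz, smul_eq_mul, smul_eq_mul]
    refine Fin.cases ?_ (fun i => ?_) i <;> simp [dirDeriv, mkDerivation_X]

theorem restrictAtZero_gaussianDeriv (Q : QuadraticForm ℝ (Fin r → ℝ)) (b : Fin r → ℝ)
    (p : MvPolynomial (Fin (r + 1)) ℝ) :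
    restrictAtZero r (gaussianDeriv (tailForm Q) (Fin.cons 0 b) p) =
      gaussianDeriv Q b (restrictAtZero r p) := by
  have coeff_succ (i : Fin r) : associated (tailForm Q) (Fin.cons 0 b) (Pi.single i.succ 1) =
      associated Q b (Pi.single i 1) := by
    have single_succ : LinearMap.funLeft ℝ ℝ Fin.succ (Pi.single i.succ 1) = Pi.single i 1 := by
      ext j
      simp [LinearMap.funLeft_apply, Pi.single_apply]
    rw [tailForm, associated_comp, LinearMap.compl₁₂_apply, single_succ]
    rfl
  have hℓ : restrictAtZero r (linearPoly (associated (tailForm Q) (Fin.cons 0 b))) =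
      linearPoly (associated Q b) := by
    simp [restrictAtZero, linearPoly, Fin.sum_univ_succ, coeff_succ]
  rw [gaussianDeriv, gaussianDeriv, ← restrictAtZero_dirDeriv, ← hℓ]
  simp only [restrictAtZero, map_sub, map_mul]

/-- The polynomial `∑ k ≤ K, x₀ᵏ / (k + 1)! • Lᵏ⁺¹ P`, where `L` is differentiation of
`exp (-Q / 2) * P` in the direction `b` at a fixed parameter `x₀`. It comes from the Taylor
expansion of `exp (-Q / 2) * P` along a step of length `x₀` in the direction `b`. -/
noncomputable def shiftPoly (Q : QuadraticForm ℝ (Fin r → ℝ)) (b : Fin r → ℝ) (K : ℕ)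
    (P : MvPolynomial (Fin (r + 1)) ℝ) : MvPolynomial (Fin (r + 1)) ℝ :=
  ∑ k ∈ Finset.range (K + 1),
    C ((k + 1)! : ℝ)⁻¹ * X 0 ^ k * (gaussianDeriv (tailForm Q) (Fin.cons 0 b))^[k + 1] P

theorem restrictAtZero_shiftPoly (Q : QuadraticForm ℝ (Fin r → ℝ)) (b : Fin r → ℝ) (K : ℕ)
    (P : MvPolynomial (Fin (r + 1)) ℝ) :
    restrictAtZero r (shiftPoly Q b K P) = gaussianDeriv Q b (restrictAtZero r P) := by
  rw [← restrictAtZero_gaussianDeriv, shiftPoly, Finset.sum_range_succ']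
  simp [restrictAtZero]

theorem sum_taylor_polyGaussian (Q : QuadraticForm ℝ (Fin r → ℝ)) (b : Fin r → ℝ) (K : ℕ)
    (P : MvPolynomial (Fin (r + 1)) ℝ) (s : ℝ) (x : Fin r → ℝ) :
    ∑ k ∈ Finset.range (K + 2), (k ! : ℝ)⁻¹ * s ^ k * polyGaussian (tailForm Q)
        ((gaussianDeriv (tailForm Q) (Fin.cons 0 b))^[k] P) (Fin.cons s x) =
      polyGaussian (tailForm Q) P (Fin.cons s x) +
        s * polyGaussian (tailForm Q) (shiftPoly Q b K P) (Fin.cons s x) := by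
  rw [Finset.sum_range_succ', add_comm]
  simp only [polyGaussian, shiftPoly, map_sum, map_mul, map_pow, eval_C, eval_X, Fin.cons_zero,
    Finset.mul_sum]
  congr 1
  · simp
  · exact Finset.sum_congr rfl fun k _ => by ring

theorem exists_abs_polyGaussian_add_smul_sub_le {Q : QuadraticForm ℝ (Fin r → ℝ)} (hQ : Q.PosDef)
    (b : Fin r → ℝ) (K : ℕ) (P : MvPolynomial (Fin (r + 1)) ℝ) :
    ∃ M, ∀ s ∈ Icc (0 : ℝ) 1, ∀ x,
      |polyGaussian (tailForm Q) P (Fin.cons s (x + s • b)) -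
          polyGaussian (tailForm Q) P (Fin.cons s x) -
          s * polyGaussian (tailForm Q) (shiftPoly Q b K P) (Fin.cons s x)| ≤
        M * s ^ (K + 2) := by
  obtain ⟨M, hM⟩ := exists_abs_polyGaussian_tailForm_le hQ
    ((gaussianDeriv (tailForm Q) (Fin.cons 0 b))^[K + 2] P)
  refine ⟨M / (K + 1)!, fun s hs x => ?_⟩
  have cons_add_smul (t : ℝ) : (Fin.cons s x + t • Fin.cons 0 b : Fin (r + 1) → ℝ) =
      Fin.cons s (x + t • b) := by
    ext i; refine Fin.cases ?_ (fun i => ?_) i <;> simp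
  have taylor := abs_polyGaussian_add_smul_sub_sum_le (tailForm Q) P (x := Fin.cons s x) hs
    fun t _ => (cons_add_smul t).symm ▸ hM s hs (x + t • b)
  rw [cons_add_smul, sum_taylor_polyGaussian, ← sub_sub] at taylor
  rwa [div_mul_eq_mul_div]

end Parameter

section Asymptotics

variable {α : Type*} {u : ℕ → ℝ} {g h : ℕ × α → ℝ}

/-- `g (n, v) = o(u n)` uniformly in `v`, as witnessed by a bound valid from `n = 1` on. -/
def UniformLittleO (u : ℕ → ℝ) (g : ℕ × α → ℝ) : Prop :=
  ∃ E : ℕ → ℝ, E =o[atTop] u ∧ ∀ n : ℕ, 1 ≤ n → ∀ v : α, |g (n, v)| ≤ E n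

theorem UniformLittleO.add (hg : UniformLittleO u g) (hh : UniformLittleO u h) :
    UniformLittleO u (g + h) := by
  obtain ⟨E, hE, hgE⟩ := hg
  obtain ⟨E', hE', hhE'⟩ := hh
  exact ⟨E + E', hE.add hE', fun n hn v =>
    (abs_add_le _ _).trans (add_le_add (hgE n hn v) (hhE' n hn v))⟩

theorem UniformLittleO.sub (hg : UniformLittleO u g) (hh : UniformLittleO u h) :
    UniformLittleO u (g - h) := by
  obtain ⟨E, hE, hgE⟩ := hg
  obtain ⟨E', hE', hhE'⟩ := hh
  exact ⟨E + E', hE.add hE', fun n hn v =>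
    (abs_sub _ _).trans (add_le_add (hgE n hn v) (hhE' n hn v))⟩

theorem UniformLittleO.comp {β : Type*} (hg : UniformLittleO u g) (j : β → α) :
    UniformLittleO u fun p => g (p.1, j p.2) :=
  let ⟨E, hE, hgE⟩ := hg
  ⟨E, hE, fun n hn v => hgE n hn (j v)⟩

theorem isLittleO_inv_sqrt_pow {N : ℝ} {k : ℕ} (hk : 2 * N < k) :
    (fun n : ℕ => (√n)⁻¹ ^ k) =o[atTop] fun n : ℕ => (n : ℝ) ^ (-N) := by
  have pos : ∀ᶠ n : ℕ in atTop, 0 < (n : ℝ) := by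
    filter_upwards [eventually_gt_atTop 0] with n hn using Nat.cast_pos.2 hn
  refine (isLittleO_iff_tendsto' (pos.mono fun n hn h => ?_)).2 ?_
  · exact absurd h (Real.rpow_pos_of_pos hn _).ne'
  have tendsto := (tendsto_rpow_neg_atTop (y := k / 2 - N) (by linarith)).comp
    tendsto_natCast_atTop_atTop
  refine tendsto.congr' (pos.mono fun n hn => ?_)
  rw [Function.comp_apply, eq_div_iff (Real.rpow_pos_of_pos hn _).ne', ← Real.rpow_add hn,
    Real.sqrt_eq_rpow, ← Real.rpow_neg hn.le, ← Real.rpow_natCast, ← Real.rpow_mul hn.le]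
  ring_nf

/-- The approximating function `exp (-Q x / (2 n)) * P (n^{-1/2}, n^{-1/2} x)`. -/
noncomputable def gaussianApprox {r : ℕ} (Q : QuadraticForm ℝ (Fin r → ℝ))
    (P : MvPolynomial (Fin (r + 1)) ℝ) (n : ℕ) (x : Fin r → ℝ) : ℝ :=
  Real.exp (-Q x / (2 * n)) * eval (Fin.cons (√n)⁻¹ fun i => x i / √n) P

theorem gaussianApprox_eq_polyGaussian {r : ℕ} (Q : QuadraticForm ℝ (Fin r → ℝ))
    (P : MvPolynomial (Fin (r + 1)) ℝ) (n : ℕ) (x : Fin r → ℝ) :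
    gaussianApprox Q P n x = polyGaussian (tailForm Q) P (Fin.cons (√n)⁻¹ ((√n)⁻¹ • x)) := by
  have hx : (fun i => x i / √n) = (√n)⁻¹ • x := funext fun i => div_eq_inv_mul _ _
  have hQ : -Q x / (2 * n) = -Q ((√n)⁻¹ • x) / 2 := by
    rw [QuadraticMap.map_smul, smul_eq_mul, ← mul_inv, Real.mul_self_sqrt n.cast_nonneg]
    ring
  rw [gaussianApprox, polyGaussian, tailForm_cons, hx, hQ]

theorem uniformLittleO_gaussianApprox_add_sub {r : ℕ} {Q : QuadraticForm ℝ (Fin r → ℝ)}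
    (hQ : Q.PosDef) (b : Fin r → ℝ) (P : MvPolynomial (Fin (r + 1)) ℝ) {N : ℝ} {K : ℕ}
    (hK : 2 * N < K + 2) :
    UniformLittleO (fun n : ℕ => (n : ℝ) ^ (-N)) fun p : ℕ × (Fin r → ℝ) =>
      gaussianApprox Q P p.1 (p.2 + b) - gaussianApprox Q P p.1 p.2 -
        (√p.1)⁻¹ * gaussianApprox Q (shiftPoly Q b K P) p.1 p.2 := by
  obtain ⟨M, hM⟩ := exists_abs_polyGaussian_add_smul_sub_le hQ b K P
  refine ⟨fun n => M * (√n)⁻¹ ^ (K + 2),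
    (isLittleO_inv_sqrt_pow (by push_cast; exact hK)).const_mul_left M, fun n hn x => ?_⟩
  have hs : (√n)⁻¹ ∈ Icc (0 : ℝ) 1 :=
    ⟨by positivity, inv_le_one_of_one_le₀ (Real.one_le_sqrt.2 (Nat.one_le_cast.2 hn))⟩
  simpa only [gaussianApprox_eq_polyGaussian, smul_add] using hM _ hs ((√n)⁻¹ • x)

end Asymptotics

theorem stmt0_general {r : ℕ} {G : Type*} [Add G] (j : G →ₙ+ (Fin r → ℝ))
    {Q : QuadraticForm ℝ (Fin r → ℝ)} (hQ : Q.PosDef) {a : G} (ha : j a ≠ 0)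
    (P : MvPolynomial (Fin (r + 1)) ℝ) (N : ℝ) :
    ∃ P' : MvPolynomial (Fin (r + 1)) ℝ,
      (∀ f : ℕ × G → ℝ,
        UniformLittleO (fun n : ℕ => (n : ℝ) ^ (-N))
          (fun p => f p - gaussianApprox Q P p.1 (j p.2)) →
        UniformLittleO (fun n : ℕ => (n : ℝ) ^ (-N))
          (fun p => f (p.1, p.2 + a) - f p - (√p.1)⁻¹ * gaussianApprox Q P' p.1 (j p.2))) ∧
      (restrictAtZero r P' = 0 ↔ restrictAtZero r P = 0) ∧
      (restrictAtZero r P ≠ 0 →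
        (restrictAtZero r P').totalDegree = (restrictAtZero r P).totalDegree + 1) := by
  obtain ⟨K, hK⟩ := exists_nat_gt (2 * N)
  have associated_ne_zero : associated Q (j a) ≠ 0 := fun h =>
    (hQ _ ha).ne' (by rw [← associated_eq_self_apply ℝ Q, h, LinearMap.zero_apply])
  refine ⟨shiftPoly Q (j a) K P, fun f hf => ?_, ?_⟩
  · have hG := uniformLittleO_gaussianApprox_add_sub hQ (j a) P (hK.trans (by linarith))
    convert ((hf.comp (· + a)).sub hf).add (hG.comp j) using 1
    ext p
    simp only [Pi.add_apply, Pi.sub_apply, map_add]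
    ring
  · rw [restrictAtZero_shiftPoly]
    exact ⟨gaussianDeriv_eq_zero_iff associated_ne_zero,
      totalDegree_gaussianDeriv associated_ne_zero⟩

/-- Finite-difference step: if `f(n,v) = e^{-Q(v)/2n} P(n^{-1/2}, n^{-1/2} v) + o(n^{-N})`
uniformly in `v`, then the finite difference of `f` in a nonzero integer direction `a`
admits a similar expansion with an extra factor `n^{-1/2}`, and the degree of the
new polynomial at `x₀ = 0` goes up by one (with the zero polynomial having
degree `-∞`, encoded by the vanishing equivalence). -/
theorem stmt0 (r : ℕ) (Q : QuadraticForm ℝ (Fin r → ℝ)) (hQ : Q.PosDef)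
    (a : Fin r → ℤ) (ha : a ≠ 0)
    (P : MvPolynomial (Fin (r + 1)) ℝ) (N : ℝ) (hN : 0 < N)
    (f : ℕ × (Fin r → ℤ) → ℝ)
    (hf : ∃ E : ℕ → ℝ, (E =o[atTop] fun n : ℕ => (n : ℝ) ^ (-N)) ∧
      ∀ n : ℕ, 1 ≤ n → ∀ v : Fin r → ℤ,
        |f (n, v) -
            Real.exp (-Q (fun i => (v i : ℝ)) / (2 * n)) *
              MvPolynomial.eval
                (Fin.cons (Real.sqrt n)⁻¹ fun i => (v i : ℝ) / Real.sqrt n) P|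
          ≤ E n) :
    ∃ P' : MvPolynomial (Fin (r + 1)) ℝ,
      (∃ E : ℕ → ℝ, (E =o[atTop] fun n : ℕ => (n : ℝ) ^ (-N)) ∧
        ∀ n : ℕ, 1 ≤ n → ∀ v : Fin r → ℤ,
          |f (n, v + a) - f (n, v) -
              (Real.sqrt n)⁻¹ *
                (Real.exp (-Q (fun i => (v i : ℝ)) / (2 * n)) *
                  MvPolynomial.eval
                    (Fin.cons (Real.sqrt n)⁻¹ fun i => (v i : ℝ) / Real.sqrt n) P')|
            ≤ E n) ∧
      (restrictAtZero r P' = 0 ↔ restrictAtZero r P = 0) ∧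
      (restrictAtZero r P ≠ 0 →
        (restrictAtZero r P').totalDegree = (restrictAtZero r P).totalDegree + 1) := by
  let j : (Fin r → ℤ) →ₙ+ (Fin r → ℝ) := ((Int.castAddHom ℝ).compLeft (Fin r) : _ →+ _)
  have hja : j a ≠ 0 := fun h => ha (funext fun i => Int.cast_eq_zero.1 (congrFun h i))
  obtain ⟨P', hP', hdeg⟩ := stmt0_general j hQ hja P N
  exact ⟨P', hP' f hf, hdeg⟩
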